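/- arXiv:1306.5116 — 2 statements merged into one kernel-verified Lean document; each statement's English description precedes it below -/
import Mathlib

section
/- Assume the standing assumptions and that NW is non-empty and finite. Then for β ∈ ℝ there exists a non-zero β-harmonic vector for A only when β = β₀, and there exists a non-zero β₀-harmonic vector which is unique up to multiplication by non-negative scalars. -/
open scoped ENNReal
open Filter

variable {V : Type*}

/-- The set of vertices of the graph of `A` that emit no edges or infinitely many edges. -/
def VInf (A : V → V → ℝ≥0∞) : Set V :=
  {v | {w | A v w ≠ 0} = ∅ ∨ {w | A v w ≠ 0}.Infinite}

/-- A set of vertices is hereditary if every edge with source in it has range in it. -/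
def Hereditary (A : V → V → ℝ≥0∞) (H : Set V) : Prop :=
  ∀ ⦃v w : V⦄, v ∈ H → A v w ≠ 0 → w ∈ H

/-- A set of vertices is saturated if it contains every finite emitter all of whose
out-neighbours lie in it. -/
def Saturated (A : V → V → ℝ≥0∞) (H : Set V) : Prop :=
  ∀ v : V, v ∉ VInf A → (∀ w, A v w ≠ 0 → w ∈ H) → v ∈ H

/-- `A` is cofinal if the only hereditary and saturated subsets are `∅` and `V`. -/
def Cofinal (A : V → V → ℝ≥0∞) : Prop :=
  ∀ H : Set V, Hereditary A H → Saturated A H → H = ∅ ∨ H = Set.univ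

/-- Matrix powers of `A`, with entries in `[0,∞]`. -/
noncomputable def Apow [DecidableEq V] (A : V → V → ℝ≥0∞) : ℕ → V → V → ℝ≥0∞
  | 0 => fun v w => if v = w then 1 else 0
  | n + 1 => fun v w => ∑' u, A v u * Apow A n u w

/-- `e^β` as an extended nonnegative real. -/
noncomputable def expb (β : ℝ) : ℝ≥0∞ := ENNReal.ofReal (Real.exp β)

/-- `e^{-nβ}` as an extended nonnegative real. -/
noncomputable def expn (β : ℝ) (n : ℕ) : ℝ≥0∞ := ENNReal.ofReal (Real.exp (-(n : ℝ) * β))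

/-- A vector `ξ : V → [0,∞)` is almost `β`-harmonic for `A` if
`∑_w A_{vw} ξ_w = e^β ξ_v` off `V_∞` and `∑_w A_{vw} ξ_w ≤ e^β ξ_v` on `V_∞`. -/
def IsAlmostHarmonic (A : V → V → ℝ≥0∞) (β : ℝ) (ξ : V → ℝ≥0∞) : Prop :=
  (∀ v, ξ v ≠ ⊤) ∧
  (∀ v, v ∉ VInf A → ∑' w, A v w * ξ w = expb β * ξ v) ∧
  (∀ v, v ∈ VInf A → ∑' w, A v w * ξ w ≤ expb β * ξ v)

/-- A vector `ξ : V → [0,∞)` is `β`-harmonic for `A` if `∑_w A_{vw} ξ_w = e^β ξ_v`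
for every vertex `v`. -/
def IsHarmonic (A : V → V → ℝ≥0∞) (β : ℝ) (ξ : V → ℝ≥0∞) : Prop :=
  (∀ v, ξ v ≠ ⊤) ∧ ∀ v, ∑' w, A v w * ξ w = expb β * ξ v

/-- The non-wandering vertices: those admitting a loop of positive length. -/
def NW (A : V → V → ℝ≥0∞) : Set V :=
  {v | Relation.TransGen (fun a b => A a b ≠ 0) v v}

/-- Standing assumptions i)–iii): `A` is cofinal, the graph has no sinks, the entries of
`A` are finite and all powers of `A` have finite entries. -/
def Standing [DecidableEq V] (A : V → V → ℝ≥0∞) : Prop :=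
  Cofinal A ∧ (∀ v, ∃ w, A v w ≠ 0) ∧ (∀ v w, A v w ≠ ⊤) ∧
    ∀ (n : ℕ) (v w : V), Apow A n v w ≠ ⊤

/-- A function `k` supported on `V_∞` is `β`-summable when
`∑_{u ∈ V_∞} ∑_n e^{-nβ} A^n_{uu} k_u < ∞`. -/
def BSummable [DecidableEq V] (A : V → V → ℝ≥0∞) (β : ℝ) (k : V → ℝ≥0∞) : Prop :=
  (∀ u, u ∉ VInf A → k u = 0) ∧ (∑' u, ∑' n, expn β n * Apow A n u u * k u) ≠ ⊤

/-- `k̂_v = ∑_{u ∈ V_∞} ∑_n e^{-nβ} A^n_{vu} k_u` (for `k` supported on `V_∞`). -/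
noncomputable def khat [DecidableEq V] (A : V → V → ℝ≥0∞) (β : ℝ) (k : V → ℝ≥0∞) (v : V) :
    ℝ≥0∞ :=
  ∑' u, ∑' n, expn β n * Apow A n v u * k u

/-- The first-return quantities `r_{vw}(n)`: `r_{vw}(0) = 0`, `r_{vw}(1) = A_{vw}` and
`r_{vw}(n+1) = ∑_{u ≠ w} A_{vu} r_{uw}(n)` for `n ≥ 1`. -/
noncomputable def fr [DecidableEq V] (A : V → V → ℝ≥0∞) (w : V) : ℕ → V → ℝ≥0∞
  | 0 => fun _ => 0
  | 1 => fun v => A v w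
  | n + 2 => fun v => ∑' u, if u = w then 0 else A v u * fr A w (n + 1) u

section PerronFrobenius

open Matrix

variable {ι : Type*} [Fintype ι]

theorem mulVec_pos_of_pos {P : Matrix ι ι ℝ} (hP : ∀ i j, 0 < P i j) {x : ι → ℝ}
    (hx : ∀ i, 0 ≤ x i) (hx0 : x ≠ 0) (i : ι) : 0 < (P *ᵥ x) i := by
  obtain ⟨j, hj⟩ := Function.ne_iff.mp hx0
  exact Finset.sum_pos' (fun k _ => mul_nonneg (hP i k).le (hx k))
    ⟨j, Finset.mem_univ j, mul_pos (hP i j) (lt_of_le_of_ne (hx j) (Ne.symm hj))⟩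

/-- A real matrix that commutes with an entrywise positive matrix has an entrywise positive
eigenvector, obtained by maximising the Collatz–Wielandt function. -/
theorem exists_pos_eigenvector_of_commute [Nonempty ι] (B P : Matrix ι ι ℝ)
    (hP : ∀ i j, 0 < P i j) (hc : P * B = B * P) :
    ∃ (l : ℝ) (x : ι → ℝ), (∀ i, 0 < x i) ∧ B *ᵥ x = l • x := by
  classical
  have hpos : ∀ x ∈ stdSimplex ℝ ι, ∀ i, 0 < (P *ᵥ x) i := by
    intro x hx i
    refine mulVec_pos_of_pos hP hx.1 ?_ i
    rintro rfl
    simpa using hx.2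
  let φ : (ι → ℝ) → ℝ := fun x =>
    Finset.univ.inf' Finset.univ_nonempty fun i => (B *ᵥ (P *ᵥ x)) i / (P *ᵥ x) i
  have hφ : ContinuousOn φ (stdSimplex ℝ ι) := by
    refine ContinuousOn.finset_inf'_apply _ fun i _ => ?_
    refine ContinuousOn.div (Continuous.continuousOn (by fun_prop))
      (Continuous.continuousOn (by fun_prop)) fun x hx => (hpos x hx i).ne'
  have hne : (stdSimplex ℝ ι).Nonempty :=
    ⟨_, single_mem_stdSimplex ℝ (Classical.arbitrary ι)⟩
  obtain ⟨x, hx, hmax⟩ := (isCompact_stdSimplex ℝ ι).exists_isMaxOn hne hφ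
  set y := P *ᵥ x with hy
  have hy0 : ∀ i, 0 < y i := hpos x hx
  refine ⟨φ x, y, hy0, ?_⟩
  by_contra hcon
  have hz0 : B *ᵥ y - φ x • y ≠ 0 := sub_ne_zero.mpr hcon
  have hz : ∀ i, 0 ≤ (B *ᵥ y - φ x • y) i := by
    intro i
    have h : φ x ≤ (B *ᵥ y) i / y i := Finset.inf'_le _ (Finset.mem_univ i)
    rw [le_div_iff₀ (hy0 i)] at h
    simpa using h
  have hPz := mulVec_pos_of_pos hP hz hz0
  have hs : 0 < ∑ i, y i := Finset.sum_pos (fun i _ => hy0 i) Finset.univ_nonempty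
  have hmem : (∑ i, y i)⁻¹ • y ∈ stdSimplex ℝ ι := by
    refine ⟨fun i => mul_nonneg (inv_nonneg.mpr hs.le) (hy0 i).le, ?_⟩
    simp only [Pi.smul_apply, smul_eq_mul, ← Finset.mul_sum]
    exact inv_mul_cancel₀ hs.ne'
  have hle : φ ((∑ i, y i)⁻¹ • y) ≤ φ x := hmax hmem
  refine absurd hle (not_le.mpr ?_)
  refine (Finset.lt_inf'_iff _).mpr fun i _ => ?_
  rw [lt_div_iff₀ (hpos _ hmem i)]
  have h := hPz i
  rw [mulVec_sub, mulVec_mulVec, hc, ← mulVec_mulVec, mulVec_smul] at h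
  simp only [Pi.sub_apply, Pi.smul_apply, smul_eq_mul, sub_pos] at h
  simp only [mulVec_smul, Pi.smul_apply, smul_eq_mul]
  have h2 := mul_lt_mul_of_pos_left h (inv_pos.mpr hs)
  linarith

variable [DecidableEq ι]

theorem Matrix.exists_pow_pos_of_reachable {B : Matrix ι ι ℝ} (hB : ∀ i j, 0 ≤ B i j) {i j : ι}
    (h : Relation.ReflTransGen (fun a b => B a b ≠ 0) i j) : ∃ n, 0 < (B ^ n) i j := by
  induction h with
  | refl => exact ⟨0, by simp⟩
  | @tail b c _ hbc ih =>
    obtain ⟨n, hn⟩ := ih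
    refine ⟨n + 1, ?_⟩
    rw [pow_succ, mul_apply]
    exact Finset.sum_pos' (fun k _ => mul_nonneg (pow_apply_nonneg hB n i k) (hB k c))
      ⟨b, Finset.mem_univ b, mul_pos hn (lt_of_le_of_ne (hB b c) (Ne.symm hbc))⟩

/-- Perron–Frobenius, existence part: an irreducible non-negative matrix has an entrywise
positive eigenvector. -/
theorem exists_pos_eigenvector_of_irreducible [Nonempty ι] (B : Matrix ι ι ℝ)
    (hB : ∀ i j, 0 ≤ B i j)
    (hirr : ∀ i j, Relation.ReflTransGen (fun a b => B a b ≠ 0) i j) :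
    ∃ (l : ℝ) (x : ι → ℝ), (∀ i, 0 < x i) ∧ B *ᵥ x = l • x := by
  choose n hn using fun p : ι × ι => Matrix.exists_pow_pos_of_reachable hB (hirr p.1 p.2)
  refine exists_pos_eigenvector_of_commute B
    (∑ k ∈ Finset.range (Finset.univ.sup n + 1), B ^ k) (fun i j => ?_) ?_
  · rw [Matrix.sum_apply]
    refine Finset.sum_pos' (fun k _ => Matrix.pow_apply_nonneg hB k i j)
      ⟨n (i, j), ?_, hn (i, j)⟩
    exact Finset.mem_range.mpr (Nat.lt_succ_of_le (Finset.le_sup (Finset.mem_univ (i, j))))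
  · exact Commute.sum_left _ _ _ fun k _ => (Commute.refl B).pow_left k

end PerronFrobenius

section Graph

variable {A : V → V → ℝ≥0∞}

/-- The saturation of a set of vertices. -/
inductive Saturation (A : V → V → ℝ≥0∞) (H : Set V) : V → Prop
  | base {v : V} : v ∈ H → Saturation A H v
  | step {v : V} : v ∉ VInf A → (∀ w, A v w ≠ 0 → Saturation A H w) → Saturation A H v

theorem saturation_of_cofinal (hA : Cofinal A) {H : Set V} (hH : Hereditary A H)
    (hne : H.Nonempty) (v : V) : Saturation A H v := by
  have h := hA {v | Saturation A H v} ?_ ?_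
  · rcases h with h | h
    · obtain ⟨w, hw⟩ := hne
      have : w ∈ {v | Saturation A H v} := .base hw
      rw [h] at this
      exact this.elim
    · exact (Set.eq_univ_iff_forall.mp h) v
  · rintro v w (hv | ⟨_, hv⟩) hvw
    · exact .base (hH hv hvw)
    · exact hv w hvw
  · exact fun v hv h => Saturation.step hv h

theorem Saturation.mem_of_mem_NW {H : Set V} (hH : Hereditary A H) {v : V}
    (hv : Saturation A H v) : v ∈ NW A → v ∈ H := by
  have hreach : ∀ {a b : V}, Relation.ReflTransGen (fun a b => A a b ≠ 0) a b → a ∈ H → b ∈ H := by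
    intro a b hab ha
    induction hab with
    | refl => exact ha
    | tail _ hbc ih => exact hH ih hbc
  induction hv with
  | base h => exact fun _ => h
  | @step v _ _ ih =>
    intro hv
    obtain ⟨w, hvw, hwv⟩ := Relation.TransGen.head'_iff.mp hv
    exact hreach hwv (ih w hvw (Relation.TransGen.tail' hwv hvw))

theorem reachable_of_mem_NW (hA : Cofinal A) (u : V) {w : V} (hw : w ∈ NW A) :
    Relation.ReflTransGen (fun a b => A a b ≠ 0) u w := by
  have hH : Hereditary A {x | Relation.ReflTransGen (fun a b => A a b ≠ 0) u x} :=
    fun _ _ hv hvw => Relation.ReflTransGen.tail hv hvw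
  exact (saturation_of_cofinal hA hH ⟨u, .refl⟩ w).mem_of_mem_NW hH hw

theorem hereditary_NW (hA : Cofinal A) : Hereditary A (NW A) :=
  fun _ w hv hvw => Relation.TransGen.tail' (reachable_of_mem_NW hA w hv) hvw

theorem notMem_VInf (hA : Cofinal A) (hsink : ∀ v, ∃ w, A v w ≠ 0)
    (hne : (NW A).Nonempty) (hfin : (NW A).Finite) (v : V) : v ∉ VInf A := by
  cases saturation_of_cofinal hA (hereditary_NW hA) hne v with
  | step h _ => exact h
  | base hv =>
    rintro (h | h)
    · obtain ⟨w, hw⟩ := hsink v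
      exact Set.eq_empty_iff_forall_notMem.mp h w hw
    · exact h (hfin.subset fun w hw => hereditary_NW hA hv hw)

theorem finite_setOf_ne_zero_of_notMem_VInf {v : V} (hv : v ∉ VInf A) :
    {w | A v w ≠ 0}.Finite :=
  Set.not_infinite.mp fun h => hv (Or.inr h)

theorem reachable_subtype {H : Set V} (hH : Hereditary A H) {u w : V} (hu : u ∈ H) (hw : w ∈ H)
    (h : Relation.ReflTransGen (fun a b => A a b ≠ 0) u w) :
    Relation.ReflTransGen (fun a b : H => A a b ≠ 0) ⟨u, hu⟩ ⟨w, hw⟩ := by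
  induction h using Relation.ReflTransGen.head_induction_on with
  | refl => exact .refl
  | head hab _ ih => exact .head hab (ih (hH hu hab))

end Graph

section Powers

variable [DecidableEq V] {A : V → V → ℝ≥0∞}

theorem Apow_add (A : V → V → ℝ≥0∞) (n k : ℕ) (v w : V) :
    Apow A (n + k) v w = ∑' u, Apow A n v u * Apow A k u w := by
  induction n generalizing v with
  | zero =>
    rw [tsum_eq_single v fun u hu => by simp [Apow, hu.symm]]
    simp [Apow]
  | succ n ih =>
    rw [Nat.succ_add]
    simp only [Apow, ih, ← ENNReal.tsum_mul_left, ← ENNReal.tsum_mul_right]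
    rw [ENNReal.tsum_comm]
    simp only [mul_assoc]

theorem exists_Apow_ne_zero {u w : V} (h : Relation.ReflTransGen (fun a b => A a b ≠ 0) u w) :
    ∃ k, Apow A k u w ≠ 0 := by
  induction h using Relation.ReflTransGen.head_induction_on with
  | refl => exact ⟨0, by simp [Apow]⟩
  | @head a b hab _ ih =>
    obtain ⟨k, hk⟩ := ih
    exact ⟨k + 1, fun h => mul_ne_zero hab hk (ENNReal.tsum_eq_zero.mp h b)⟩

theorem Apow_eq_zero_of_hereditary {H : Set V} (hH : Hereditary A H) (n : ℕ) {v w : V}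
    (hv : v ∈ H) (hw : w ∉ H) : Apow A n v w = 0 := by
  induction n generalizing v with
  | zero => exact if_neg (ne_of_mem_of_not_mem hv hw)
  | succ n ih =>
    refine ENNReal.tsum_eq_zero.mpr fun u => ?_
    by_cases hu : A v u = 0
    · simp [hu]
    · rw [ih (hH hv hu), mul_zero]

theorem IsHarmonic.tsum_Apow {β : ℝ} {ξ : V → ℝ≥0∞} (h : IsHarmonic A β ξ) (n : ℕ) (v : V) :
    ∑' w, Apow A n v w * ξ w = expb β ^ n * ξ v := by
  induction n generalizing v with
  | zero =>
    rw [tsum_eq_single v fun u hu => by simp [Apow, hu.symm]]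
    simp [Apow]
  | succ n ih =>
    simp only [Apow, ← ENNReal.tsum_mul_right]
    rw [ENNReal.tsum_comm]
    simp only [mul_assoc, ENNReal.tsum_mul_left, ih]
    simp only [mul_left_comm (A v _), ENNReal.tsum_mul_left, h.2 v]
    rw [pow_succ, mul_assoc]

end Powers

section Harmonic

variable {A : V → V → ℝ≥0∞} {β : ℝ} {ξ : V → ℝ≥0∞}

theorem expb_ne_zero (β : ℝ) : expb β ≠ 0 := by
  simpa [expb] using Real.exp_pos β

theorem expb_ne_top (β : ℝ) : expb β ≠ ⊤ := ENNReal.ofReal_ne_top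

theorem expb_injective : Function.Injective expb := fun a b h =>
  Real.exp_injective ((ENNReal.ofReal_eq_ofReal_iff (Real.exp_pos a).le (Real.exp_pos b).le).mp h)

/-- Two harmonic vectors that agree up to a factor on a hereditary set agree up to that factor on
its saturation. -/
theorem Saturation.eq_mul {H : Set V} {η : V → ℝ≥0∞} {c : ℝ≥0∞} (hξ : IsHarmonic A β ξ)
    (hη : IsHarmonic A β η) (hH : ∀ v ∈ H, η v = c * ξ v) {v : V} (hv : Saturation A H v) :
    η v = c * ξ v := by
  induction hv with
  | base h => exact hH _ h
  | @step v _ _ ih =>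
    refine (ENNReal.mul_right_inj (expb_ne_zero β) (expb_ne_top β)).mp ?_
    rw [← hη.2, mul_left_comm, ← hξ.2, ← ENNReal.tsum_mul_left]
    refine tsum_congr fun w => ?_
    by_cases hw : A v w = 0
    · simp [hw]
    · rw [ih w hw, mul_left_comm]

theorem IsHarmonic.eq_zero_of_reachable (h : IsHarmonic A β ξ) {u w : V} (hu : ξ u = 0)
    (huw : Relation.ReflTransGen (fun a b => A a b ≠ 0) u w) : ξ w = 0 := by
  induction huw with
  | refl => exact hu
  | @tail b c _ hbc ih =>
    have hsum := h.2 b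
    rw [ih, mul_zero] at hsum
    exact (mul_eq_zero.mp (ENNReal.tsum_eq_zero.mp hsum c)).resolve_left hbc

theorem IsHarmonic.ne_zero_of_cofinal (hA : Cofinal A) (hne : (NW A).Nonempty)
    (h : IsHarmonic A β ξ) (hξ : ξ ≠ 0) (v : V) : ξ v ≠ 0 := by
  intro hv
  refine hξ (funext fun u => ?_)
  have := (saturation_of_cofinal hA (hereditary_NW hA) hne u).eq_mul (c := 0) h h fun w hw => by
    rw [zero_mul, h.eq_zero_of_reachable hv (reachable_of_mem_NW hA v hw)]
  rw [this, zero_mul, Pi.zero_apply]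

/-- On a vertex set where one harmonic vector dominates another, equality propagates along
edges. -/
theorem IsHarmonic.eq_of_edge {η : V → ℝ≥0∞} {c : ℝ≥0∞} (hξ : IsHarmonic A β ξ)
    (hη : IsHarmonic A β η) (hAtop : ∀ v w, A v w ≠ ⊤) {v w : V}
    (hle : ∀ u, A v u ≠ 0 → c * ξ u ≤ η u) (hv : η v = c * ξ v) (hvw : A v w ≠ 0) :
    η w = c * ξ w := by
  have hle' : ∀ u, A v u * (c * ξ u) ≤ A v u * η u := fun u => by
    by_cases hu : A v u = 0
    · simp [hu]
    · gcongr
      exact hle u hu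
  have hsum : ∑' u, A v u * (c * ξ u) = ∑' u, A v u * η u := by
    simp only [mul_left_comm (A v _), ENNReal.tsum_mul_left, hξ.2, hη.2, hv]
    exact mul_left_comm _ _ _
  have hfin : ∑' u, A v u * (c * ξ u) ≠ ⊤ := by
    rw [hsum, hη.2]
    exact ENNReal.mul_ne_top (expb_ne_top β) (hη.1 v)
  by_contra hcon
  have hlt : A v w * (c * ξ w) < A v w * η w :=
    (ENNReal.mul_lt_mul_iff_right hvw (hAtop v w)).mpr (lt_of_le_of_ne (hle w hvw) (Ne.symm hcon))
  exact (ENNReal.tsum_lt_tsum hfin hle' hlt).ne hsum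

theorem IsHarmonic.exists_eq_mul {η : V → ℝ≥0∞} (hA : Cofinal A) (hAtop : ∀ v w, A v w ≠ ⊤)
    (hne : (NW A).Nonempty) (hfin : (NW A).Finite) (hξ : IsHarmonic A β ξ) (hξ0 : ξ ≠ 0)
    (hη : IsHarmonic A β η) : ∃ c : ℝ≥0∞, c ≠ ⊤ ∧ ∀ v, η v = c * ξ v := by
  have hpos := hξ.ne_zero_of_cofinal hA hne hξ0
  obtain ⟨v₀, hv₀, hmin⟩ := Set.exists_min_image (NW A) (fun v => η v / ξ v) hfin hne
  have hle : ∀ u ∈ NW A, η v₀ / ξ v₀ * ξ u ≤ η u := fun u hu =>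
    (ENNReal.le_div_iff_mul_le (Or.inl (hpos u)) (Or.inl (hξ.1 u))).mp (hmin u hu)
  refine ⟨η v₀ / ξ v₀, ENNReal.div_ne_top (hη.1 v₀) (hpos v₀), fun v => ?_⟩
  refine (saturation_of_cofinal hA (hereditary_NW hA) hne v).eq_mul hξ hη fun w hw => ?_
  have hmem : ∀ {u}, Relation.ReflTransGen (fun a b => A a b ≠ 0) v₀ u →
      u ∈ NW A ∧ η u = η v₀ / ξ v₀ * ξ u := by
    intro u hu
    induction hu with
    | refl => exact ⟨hv₀, (ENNReal.div_mul_cancel (hpos v₀) (hξ.1 v₀)).symm⟩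
    | tail _ hbc ih =>
      exact ⟨hereditary_NW hA ih.1 hbc, hξ.eq_of_edge hη hAtop
        (fun u hu => hle u (hereditary_NW hA ih.1 hu)) ih.2 hbc⟩
  exact (hmem (reachable_of_mem_NW hA v₀ hw)).2

/-- A positive harmonic vector for a finite non-wandering part determines the growth rate of the
return weights. -/
theorem IsHarmonic.limsup_Apow [DecidableEq V] (hst : Standing A) (hfin : (NW A).Finite)
    (h : IsHarmonic A β ξ) (hξ : ξ ≠ 0) {v : V} (hv : v ∈ NW A) :
    limsup (fun n : ℕ => Apow A n v v ^ ((n : ℝ)⁻¹)) atTop = expb β := by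
  obtain ⟨hA, -, -, hpow⟩ := hst
  have hpos := h.ne_zero_of_cofinal hA ⟨v, hv⟩ hξ
  refine le_antisymm ?_ ?_
  · refine limsup_le_of_le (h := ?_)
    filter_upwards [eventually_ne_atTop 0] with n hn
    have hle : Apow A n v v ≤ expb β ^ n := by
      refine (ENNReal.mul_le_mul_iff_left (hpos v) (h.1 v)).mp ?_
      rw [← h.tsum_Apow]
      exact ENNReal.le_tsum v
    calc Apow A n v v ^ ((n : ℝ)⁻¹) ≤ (expb β ^ n) ^ ((n : ℝ)⁻¹) :=
          ENNReal.rpow_le_rpow hle (by positivity)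
      _ = expb β := ENNReal.pow_rpow_inv_natCast hn _
  · by_contra! hlt
    obtain ⟨μ, hμ, hμβ⟩ := exists_between hlt
    have hμtop : μ ≠ ⊤ := (hμβ.trans_le le_top).ne
    obtain ⟨N, hN⟩ := eventually_atTop.mp (eventually_lt_of_limsup_lt hμ)
    have hbound : ∀ n, N ≤ n → n ≠ 0 → Apow A n v v ≤ μ ^ n := fun n hn hn0 => by
      have := ENNReal.rpow_le_rpow (hN n hn).le (Nat.cast_nonneg (α := ℝ) n)
      rwa [ENNReal.rpow_inv_rpow (Nat.cast_ne_zero.mpr hn0), ENNReal.rpow_natCast] at this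
    choose k hk using fun w => exists_Apow_ne_zero (reachable_of_mem_NW hA w hv)
    let C : V → ℝ≥0∞ := fun w => μ ^ k w / Apow A (k w) w v * ξ w
    have hC : ∑ w ∈ hfin.toFinset, C w ≠ ⊤ := ENNReal.sum_ne_top.mpr fun w _ =>
      ENNReal.mul_ne_top (ENNReal.div_ne_top (ENNReal.pow_ne_top hμtop) (hk w)) (h.1 w)
    have hentry : ∀ n, N ≤ n → n ≠ 0 → ∀ w, Apow A n v w * ξ w ≤ μ ^ n * C w := by
      intro n hn hn0 w
      rw [← mul_assoc]
      gcongr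
      rw [← mul_div_assoc, ENNReal.le_div_iff_mul_le (Or.inl (hk w)) (Or.inl (hpow _ _ _)),
        ← pow_add]
      refine le_trans ?_ (hbound (n + k w) (by omega) (by omega))
      rw [Apow_add]
      exact ENNReal.le_tsum w
    have hle : ∀ n, N ≤ n → n ≠ 0 →
        ξ v ≤ (μ / expb β) ^ n * ∑ w ∈ hfin.toFinset, C w := by
      intro n hn hn0
      have hexp0 : expb β ^ n ≠ 0 := pow_ne_zero _ (expb_ne_zero β)
      have hexpt : expb β ^ n ≠ ⊤ := ENNReal.pow_ne_top (expb_ne_top β)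
      rw [div_eq_mul_inv, mul_pow, ← ENNReal.inv_pow, ← div_eq_mul_inv,
        ← ENNReal.mul_div_right_comm,
        ENNReal.le_div_iff_mul_le (Or.inl hexp0) (Or.inl hexpt), mul_comm, ← h.tsum_Apow,
        tsum_eq_sum (s := hfin.toFinset) fun w hw => by
          rw [Apow_eq_zero_of_hereditary (hereditary_NW hA) n hv (by simpa using hw), zero_mul],
        Finset.mul_sum]
      exact Finset.sum_le_sum fun w _ => hentry n hn hn0 w
    have hq : μ / expb β < 1 := by
      rwa [ENNReal.div_lt_iff (Or.inl (expb_ne_zero β)) (Or.inl (expb_ne_top β)), one_mul]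
    have hlim := ENNReal.Tendsto.mul_const
      (ENNReal.tendsto_pow_atTop_nhds_zero_of_lt_one hq) (Or.inr hC)
    rw [zero_mul] at hlim
    refine hpos v (le_antisymm (ge_of_tendsto hlim ?_) bot_le)
    filter_upwards [eventually_ge_atTop N, eventually_ne_atTop 0] with n hn hn0
    exact hle n hn hn0

/-- A finite solution of the harmonicity equations on a hereditary set whose saturation is
everything extends to a harmonic vector. -/
theorem exists_isHarmonic_extension {H : Set V} (hAtop : ∀ v w, A v w ≠ ⊤)
    (hrow : ∀ v, {w | A v w ≠ 0}.Finite) (hH : Hereditary A H) (hsat : ∀ v, Saturation A H v)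
    {x : V → ℝ≥0∞} (hxtop : ∀ v ∈ H, x v ≠ ⊤)
    (hx : ∀ v ∈ H, ∑' w, A v w * x w = expb β * x v) :
    ∃ ξ, IsHarmonic A β ξ ∧ ∀ v ∈ H, ξ v = x v := by
  classical
  have hwf : WellFounded fun w v : V => v ∉ H ∧ A v w ≠ 0 := by
    refine ⟨fun v => ?_⟩
    induction hsat v with
    | base hv => exact ⟨_, fun w hw => absurd hv hw.1⟩
    | step _ _ ih => exact ⟨_, fun w hw => ih w hw.2⟩
  let F : (v : V) → ((w : V) → (v ∉ H ∧ A v w ≠ 0) → ℝ≥0∞) → ℝ≥0∞ := fun v f =>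
    if v ∈ H then x v
    else (expb β)⁻¹ * ∑' w, if hw : v ∉ H ∧ A v w ≠ 0 then A v w * f w hw else 0
  let ξ : V → ℝ≥0∞ := hwf.fix F
  have hξH : ∀ v ∈ H, ξ v = x v := fun v hv => by
    simp only [ξ, hwf.fix_eq F v]
    exact if_pos hv
  have hξ : ∀ v ∉ H, ξ v = (expb β)⁻¹ * ∑' w, A v w * ξ w := fun v hv => by
    simp only [ξ]
    rw [hwf.fix_eq F v]
    refine (if_neg hv).trans (congrArg _ (tsum_congr fun w => ?_))
    by_cases hw : A v w = 0 <;> simp [hw, hv]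
  refine ⟨ξ, ⟨fun v => ?_, fun v => ?_⟩, hξH⟩
  · induction hsat v with
    | base hv => exact hξH _ hv ▸ hxtop _ hv
    | @step v _ _ ih =>
      by_cases hv : v ∈ H
      · exact hξH v hv ▸ hxtop v hv
      rw [hξ v hv, tsum_eq_sum (s := (hrow v).toFinset) fun w hw => by
        simp [show A v w = 0 by simpa using hw]]
      refine ENNReal.mul_ne_top (ENNReal.inv_ne_top.mpr (expb_ne_zero β))
        (ENNReal.sum_ne_top.mpr fun w hw => ENNReal.mul_ne_top (hAtop v w) (ih w ?_))
      simpa using hw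
  · by_cases hv : v ∈ H
    · rw [hξH v hv, ← hx v hv]
      refine tsum_congr fun w => ?_
      by_cases hw : A v w = 0
      · simp [hw]
      · rw [hξH w (hH hv hw)]
    · rw [hξ v hv, ← mul_assoc, ENNReal.mul_inv_cancel (expb_ne_zero β) (expb_ne_top β), one_mul]

theorem exists_isHarmonic (hA : Cofinal A) (hsink : ∀ v, ∃ w, A v w ≠ 0)
    (hAtop : ∀ v w, A v w ≠ ⊤) (hne : (NW A).Nonempty) (hfin : (NW A).Finite) :
    ∃ (β : ℝ) (ξ : V → ℝ≥0∞), IsHarmonic A β ξ ∧ ξ ≠ 0 := by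
  classical
  have hNW := hereditary_NW hA
  have : Fintype (NW A) := hfin.fintype
  have : Nonempty (NW A) := hne.to_subtype
  have hBne : ∀ i j : NW A, (A i j).toReal ≠ 0 ↔ A i j ≠ 0 := fun i j => by
    simp [ENNReal.toReal_eq_zero_iff, hAtop]
  obtain ⟨l, x, hx, hl⟩ := exists_pos_eigenvector_of_irreducible
    (Matrix.of fun i j : NW A => (A i j).toReal) (fun i j => ENNReal.toReal_nonneg)
    (fun i j => by
      simpa only [Matrix.of_apply, hBne] using
        reachable_subtype hNW i.2 j.2 (reachable_of_mem_NW hA i j.2))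
  have hrow : ∀ i : NW A, ∑ j : NW A, (A i j).toReal * x j = l * x i := fun i => congrFun hl i
  have hlpos : 0 < l := by
    obtain ⟨i⟩ := ‹Nonempty (NW A)›
    obtain ⟨w, hw⟩ := hsink i
    refine pos_of_mul_pos_left (b := x i) ?_ (hx i).le
    rw [← hrow i]
    exact Finset.sum_pos' (fun j _ => mul_nonneg ENNReal.toReal_nonneg (hx j).le)
      ⟨⟨w, hNW i.2 hw⟩, Finset.mem_univ _, mul_pos (ENNReal.toReal_pos hw (hAtop _ _)) (hx _)⟩
  let y : V → ℝ≥0∞ := fun v => if hv : v ∈ NW A then ENNReal.ofReal (x ⟨v, hv⟩) else 0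
  have hy : ∀ i : NW A, y i = ENNReal.ofReal (x i) := fun i => by simp [y]
  have hyrow : ∀ v ∈ NW A, ∑' w, A v w * y w = expb (Real.log l) * y v := by
    intro v hv
    have hsupp : Function.support (fun w => A v w * y w) ⊆ NW A := fun w hw =>
      hNW hv (left_ne_zero_of_mul hw)
    rw [← tsum_subtype_eq_of_support_subset hsupp, tsum_fintype, expb, Real.exp_log hlpos,
      hy ⟨v, hv⟩, ← ENNReal.ofReal_mul hlpos.le, ← hrow,
      ENNReal.ofReal_sum_of_nonneg fun j _ => mul_nonneg ENNReal.toReal_nonneg (hx j).le]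
    refine Finset.sum_congr rfl fun j _ => ?_
    rw [hy, ENNReal.ofReal_mul ENNReal.toReal_nonneg, ENNReal.ofReal_toReal (hAtop _ _)]
  obtain ⟨ξ, hξ, hξy⟩ := exists_isHarmonic_extension hAtop
    (fun v => finite_setOf_ne_zero_of_notMem_VInf (notMem_VInf hA hsink hne hfin v)) hNW
    (saturation_of_cofinal hA hNW hne) (fun v hv => by simp [y, hv]) hyrow
  refine ⟨_, ξ, hξ, fun h0 => ?_⟩
  obtain ⟨v, hv⟩ := hne
  have := hξy v hv
  rw [h0, hy ⟨v, hv⟩] at this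
  exact (ENNReal.ofReal_pos.mpr (hx ⟨v, hv⟩)).ne this

end Harmonic

/-- Under the standing assumptions, if `NW` is non-empty and finite then a
non-zero `β`-harmonic vector exists only when `β = β₀`, and there is a non-zero
`β₀`-harmonic vector, unique up to multiplication by non-negative scalars. -/
theorem stmt15 [Countable V] [DecidableEq V] (A : V → V → ℝ≥0∞)
    (hst : Standing A) (β₀ : ℝ)
    (hβ₀ : ∀ v ∈ NW A,
      Filter.limsup (fun n : ℕ => Apow A n v v ^ ((n : ℝ)⁻¹)) Filter.atTop = expb β₀)
    (hne : (NW A).Nonempty) (hfin : (NW A).Finite) :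
    (∀ (β : ℝ) (ξ : V → ℝ≥0∞), IsHarmonic A β ξ → ξ ≠ 0 → β = β₀) ∧
      ∃ ξ : V → ℝ≥0∞, (IsHarmonic A β₀ ξ ∧ ξ ≠ 0) ∧
        ∀ ξ' : V → ℝ≥0∞, IsHarmonic A β₀ ξ' → ξ' ≠ 0 →
          ∃ c : ℝ≥0∞, c ≠ ⊤ ∧ ∀ v, ξ' v = c * ξ v := by
  obtain ⟨hA, hsink, hAtop, -⟩ := id hst
  have hβ : ∀ (β : ℝ) (ξ : V → ℝ≥0∞), IsHarmonic A β ξ → ξ ≠ 0 → β = β₀ := by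
    intro β ξ h hξ
    obtain ⟨v, hv⟩ := hne
    exact expb_injective ((h.limsup_Apow hst hfin hξ hv).symm.trans (hβ₀ v hv))
  obtain ⟨β, ξ, h, hξ⟩ := exists_isHarmonic hA hsink hAtop hne hfin
  obtain rfl := hβ β ξ h hξ
  exact ⟨hβ, ξ, ⟨h, hξ⟩, fun ξ' h' _ => h.exists_eq_mul hA hAtop hne hfin hξ h'⟩
end

section
/- Assume the standing assumptions and let β ∈ ℝ. If NW = ∅, or if ∑_{n=0}^∞ A^n_{uu} e^{-nβ} < ∞ for some u ∈ NW, then ∑_{n=0}^∞ A^n_{vw} e^{-nβ} < ∞ for all v, w ∈ V. -/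
open scoped ENNReal
open Filter

variable {V : Type*}

lemma expn_zero (β : ℝ) : expn β 0 = 1 := by simp [expn]

lemma expn_succ (β : ℝ) (n : ℕ) : expn β (n + 1) = expn β 1 * expn β n := by
  rw [expn, expn, expn, ← ENNReal.ofReal_mul (Real.exp_pos _).le, ← Real.exp_add]
  congr 2
  push_cast
  ring

lemma expn_ne_zero (β : ℝ) (n : ℕ) : expn β n ≠ 0 := by
  simp [expn, Real.exp_pos]

lemma expn_ne_top (β : ℝ) (n : ℕ) : expn β n ≠ ⊤ := ENNReal.ofReal_ne_top

section Green

variable [DecidableEq V] (A : V → V → ℝ≥0∞) (β : ℝ)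

/-- The Green function `∑_n A^n_{vw} e^{-nβ}`. -/
noncomputable def green (v w : V) : ℝ≥0∞ := ∑' n : ℕ, Apow A n v w * expn β n

lemma green_eq (v w : V) :
    green A β v w = (if v = w then 1 else 0) + expn β 1 * ∑' u, A v u * green A β u w := by
  rw [green, tsum_eq_zero_add' ENNReal.summable, expn_zero, mul_one]
  congr 1
  simp only [green, ← ENNReal.tsum_mul_left]
  rw [ENNReal.tsum_comm]
  refine tsum_congr fun n => ?_
  rw [Apow, ← ENNReal.tsum_mul_right]
  refine tsum_congr fun u => ?_
  rw [expn_succ]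
  ring

lemma Apow_mul_le (n : ℕ) (u v x : V) : Apow A n u v * A v x ≤ Apow A (n + 1) u x := by
  induction n generalizing u with
  | zero =>
    by_cases huv : u = v
    · subst huv
      simp [Apow]
    · simp [Apow, huv]
  | succ n ih =>
    rw [Apow, ← ENNReal.tsum_mul_right, Apow]
    refine ENNReal.tsum_le_tsum fun y => ?_
    rw [mul_assoc]
    exact mul_le_mul_right (ih y) _

lemma green_mul_le (u v x : V) : green A β u v * A v x * expn β 1 ≤ green A β u x := by
  rw [green, ← ENNReal.tsum_mul_right, ← ENNReal.tsum_mul_right, green,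
    tsum_eq_zero_add' (f := fun n => Apow A n u x * expn β n) ENNReal.summable]
  refine le_trans (ENNReal.tsum_le_tsum fun n => ?_) le_add_self
  calc Apow A n u v * expn β n * A v x * expn β 1
      = Apow A n u v * A v x * expn β (n + 1) := by rw [expn_succ β n]; ring
    _ ≤ _ := mul_le_mul_left (Apow_mul_le A n u v x) _

variable {A β}

lemma green_ne_top_of_edge_right {u v x : V} (hvx : A v x ≠ 0) (hx : green A β u x ≠ ⊤) :
    green A β u v ≠ ⊤ := by
  intro htop
  refine hx (top_le_iff.mp (le_trans (le_of_eq ?_) (green_mul_le A β u v x)))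
  rw [htop, ENNReal.top_mul hvx, ENNReal.top_mul (expn_ne_zero β 1)]

lemma green_ne_top_of_transGen {u v x : V}
    (hvx : Relation.TransGen (fun a b => A a b ≠ 0) v x) (hx : green A β u x ≠ ⊤) :
    green A β u v ≠ ⊤ := by
  induction hvx using Relation.TransGen.head_induction_on with
  | single hvx => exact green_ne_top_of_edge_right hvx hx
  | head hvy _ ih => exact green_ne_top_of_edge_right hvy ih

lemma hereditary_green_ne_top (w : V) : Hereditary A {v | green A β v w ≠ ⊤} := by
  intro v u hv hvu htop
  refine hv ?_
  have hsum : ∑' y, A v y * green A β y w = ⊤ :=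
    ENNReal.tsum_eq_top_of_eq_top ⟨u, by rw [htop, ENNReal.mul_top hvu]⟩
  rw [green_eq, hsum, ENNReal.mul_top (expn_ne_zero β 1), add_top]

lemma saturated_green_ne_top (hA : ∀ v w, A v w ≠ ⊤) (w : V) :
    Saturated A {v | green A β v w ≠ ⊤} := by
  intro v hv hout
  have hfin : {y | A v y ≠ 0}.Finite := Set.not_infinite.mp fun h => hv (Or.inr h)
  have hsum : ∑' y, A v y * green A β y w ≠ ⊤ := by
    rw [tsum_eq_sum (s := hfin.toFinset) fun y hy => by
      have : A v y = 0 := by simpa using hy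
      rw [this, zero_mul]]
    refine ENNReal.sum_ne_top.mpr fun y hy => ENNReal.mul_ne_top (hA v y) (hout y ?_)
    simpa using hy
  rw [Set.mem_ofPred_eq, green_eq]
  refine ENNReal.add_ne_top.mpr ⟨?_, ENNReal.mul_ne_top (expn_ne_top β 1) hsum⟩
  split_ifs <;> simp

/-- Under cofinality, a column of the Green function with one finite entry is finite. -/
lemma green_ne_top_of_exists (hcof : Cofinal A) (hA : ∀ v w, A v w ≠ ⊤) {v₀ w : V}
    (h₀ : green A β v₀ w ≠ ⊤) (v : V) : green A β v w ≠ ⊤ := by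
  rcases hcof _ (hereditary_green_ne_top w) (saturated_green_ne_top hA w) with h | h
  · exact absurd h (Set.Nonempty.ne_empty ⟨v₀, h₀⟩)
  · exact Set.eq_univ_iff_forall.mp h v

lemma transGen_of_Apow_succ_ne_zero {n : ℕ} {v w : V} (h : Apow A (n + 1) v w ≠ 0) :
    Relation.TransGen (fun a b => A a b ≠ 0) v w := by
  induction n generalizing v with
  | zero =>
    refine .single fun h0 => h ?_
    refine ENNReal.tsum_eq_zero.mpr fun u => ?_
    by_cases huw : u = w
    · rw [huw, h0, zero_mul]
    · simp [Apow, huw]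
  | succ n ih =>
    rw [Apow, Ne, ENNReal.tsum_eq_zero, not_forall] at h
    obtain ⟨u, hu⟩ := h
    exact .head (left_ne_zero_of_mul hu) (ih (right_ne_zero_of_mul hu))

lemma green_self_of_notMem_NW {w : V} (hw : w ∉ NW A) : green A β w w = 1 := by
  rw [green, tsum_eq_single 0]
  · simp [Apow, expn_zero]
  · rintro (_ | n) hn
    · exact absurd rfl hn
    · rw [not_not.mp fun h => hw (transGen_of_Apow_succ_ne_zero h), zero_mul]

end Green

/-- Under cofinality, every vertex reaches every non-wandering vertex. -/
lemma transGen_of_mem_NW {A : V → V → ℝ≥0∞} (hcof : Cofinal A)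
    {u : V} (hu : u ∈ NW A) (v : V) :
    Relation.TransGen (fun a b => A a b ≠ 0) v u := by
  have hher : Hereditary A {v | ¬ Relation.TransGen (fun a b => A a b ≠ 0) v u} :=
    fun x y hx hxy hy => hx (.head hxy hy)
  have hsat : Saturated A {v | ¬ Relation.TransGen (fun a b => A a b ≠ 0) v u} := by
    intro x _ hout hx
    rcases Relation.TransGen.head'_iff.mp hx with ⟨y, hxy, hyu⟩
    rcases Relation.reflTransGen_iff_eq_or_transGen.mp hyu with rfl | hyu
    · exact hout _ hxy hu
    · exact hout y hxy hyu
  rcases hcof _ hher hsat with h | h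
  · by_contra hv
    exact Set.eq_empty_iff_forall_notMem.mp h v hv
  · exact absurd hu (Set.eq_univ_iff_forall.mp h u)

/-- Under the standing assumptions, if `NW = ∅` or
`∑_n A^n_{uu} e^{-nβ} < ∞` for some `u ∈ NW`, then `∑_n A^n_{vw} e^{-nβ} < ∞` for all
`v, w ∈ V`. -/
theorem stmt16 [Countable V] [DecidableEq V] (A : V → V → ℝ≥0∞)
    (hst : Standing A)
    (hiv : ∀ v ∈ NW A,
      Filter.limsup (fun n : ℕ => Apow A n v v ^ ((n : ℝ)⁻¹)) Filter.atTop ≠ ⊤)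
    (β : ℝ)
    (h : NW A = ∅ ∨ ∃ u ∈ NW A, ∑' n : ℕ, Apow A n u u * expn β n ≠ ⊤) :
    ∀ v w : V, ∑' n : ℕ, Apow A n v w * expn β n ≠ ⊤ := by
  obtain ⟨hcof, -, hA, -⟩ := hst
  intro v w
  change green A β v w ≠ ⊤
  rcases h with hNW | ⟨u, hu, hfin⟩
  · refine green_ne_top_of_exists hcof hA (v₀ := w) ?_ v
    rw [green_self_of_notMem_NW (by simp [hNW])]
    exact ENNReal.one_ne_top
  · exact green_ne_top_of_exists hcof hA
      (green_ne_top_of_transGen (transGen_of_mem_NW hcof hu w) hfin) v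
end
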